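/- Let p be a prime, let u, v be positive integers, and set d = gcd(u, v), q = p^{2uv/d}, α = (q−1)/(p^u+1), β = (q−1)/(p^v+1). Then for all integers i, j with 1 ≤ i ≤ p^u, 1 ≤ j ≤ p^v, and i(p^v+1) < j(p^u+1), the binomial coefficient C(jβ, iα) is divisible by p. -/

import Mathlib

/-!
Write `s` for the sum of the base-`p` digits. From `α (pᵘ + 1) = pⁿ - 1`, multiplying `i α` by `pᵘ`
modulo `pⁿ - 1` rotates its `n` digits and also negates it, that is, complements every digit. Hence
`2 s(i α) = n (p - 1)`, independently of `u` and of `0 < i ≤ pᵘ`, so `s(i α) = s(j β)`. By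
Kummer's theorem `(p - 1) v_p(C(j β, i α)) = s(i α) + s(j β - i α) - s(j β) = s(j β - i α)`, which
is positive because `i α < j β`.
-/

section DigitSum

variable {b : ℕ}

lemma sum_digits_eq_mod_add_sum_digits_div (hb : 1 < b) (n : ℕ) :
    (b.digits n).sum = n % b + (b.digits (n / b)).sum := by
  rcases n.eq_zero_or_pos with rfl | hn
  · simp
  · rw [Nat.digits_def' hb hn, List.sum_cons]

lemma sum_digits_add_base_pow_mul (hb : 1 < b) {k x : ℕ} (hx : x < b ^ k) (y : ℕ) :
    (b.digits (x + b ^ k * y)).sum = (b.digits x).sum + (b.digits y).sum := by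
  rcases y.eq_zero_or_pos with rfl | hy
  · simp
  · obtain ⟨l, rfl⟩ := Nat.exists_eq_add_of_le ((Nat.digits_length_le_iff hb x).mpr hx)
    simp [← Nat.digits_append_zeroes_append_digits hb hy]

lemma sum_digits_add_sum_digits_of_add_add_one_eq_pow (hb : 1 < b) {n x y : ℕ}
    (h : x + y + 1 = b ^ n) :
    (b.digits x).sum + (b.digits y).sum = n * (b - 1) := by
  induction n generalizing x y with
  | zero =>
    obtain ⟨rfl, rfl⟩ : x = 0 ∧ y = 0 := by simpa using h
    simp
  | succ n ih =>
    have hsplit : (x % b + y % b + 1) + b * (x / b + y / b) = b * b ^ n := by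
      rw [← pow_succ', ← h]
      linarith [Nat.mod_add_div x b, Nat.mod_add_div y b]
    have hlow : x % b + y % b + 1 = b := by
      have hdvd : b ∣ x % b + y % b + 1 :=
        (Nat.dvd_add_left (dvd_mul_right b _)).mp (hsplit ▸ dvd_mul_right b _)
      have hxb := Nat.mod_lt x (Nat.zero_lt_of_lt hb)
      have hyb := Nat.mod_lt y (Nat.zero_lt_of_lt hb)
      exact Nat.eq_of_dvd_of_lt_two_mul (by omega) hdvd (by omega)
    have hhigh : x / b + y / b + 1 = b ^ n := by
      refine Nat.eq_of_mul_eq_mul_left (Nat.zero_lt_of_lt hb) ?_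
      rw [← hsplit, hlow]
      ring
    rw [sum_digits_eq_mod_add_sum_digits_div hb x, sum_digits_eq_mod_add_sum_digits_div hb y,
      Nat.succ_mul, ← ih hhigh]
    omega

-- As `b ^ u * α ≡ -α` modulo `b ^ n - 1`, the complement of `(t + 1) * α` is its rotation by `u`
-- digits: `a` and `t` are the two blocks that the rotation swaps.
lemma exists_digit_blocks_of_mul_pow_add_one_eq (hb : 1 < b) {u n α t : ℕ} (hn : n ≠ 0)
    (hα : α * (b ^ u + 1) = b ^ n - 1) (ht : t < b ^ u) :
    ∃ m a, a < b ^ m ∧ (t + 1) * α = a + b ^ m * t ∧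
      (t + 1) * α + (t + b ^ u * a) + 1 = b ^ n := by
  have hpow : 1 < b ^ n := Nat.one_lt_pow hn hb
  have hα0 : 0 < α := Nat.pos_of_mul_pos_right (hα ▸ Nat.sub_pos_of_lt hpow)
  have hα' : α * b ^ u + (α + 1) = b ^ n := by rw [← add_assoc, ← mul_add_one]; omega
  have hun : u ≤ n := (Nat.pow_le_pow_iff_right hb).mp <|
    (Nat.le_mul_of_pos_left _ hα0).trans (hα' ▸ Nat.le_add_right _ _)
  obtain ⟨m, rfl⟩ := Nat.exists_eq_add_of_le hun
  obtain ⟨c, hc⟩ : b ^ u ∣ α + 1 :=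
    (Nat.dvd_add_right (dvd_mul_left _ α)).mp (hα' ▸ pow_dvd_pow b hun)
  have hαc : α + c = b ^ m := by
    refine Nat.eq_of_mul_eq_mul_left (Nat.pow_pos (n := u) (Nat.zero_lt_of_lt hb)) ?_
    rw [← pow_add, ← hα', hc]
    ring
  have hc0 : 0 < c := Nat.pos_of_mul_pos_left (hc ▸ Nat.add_one_pos α)
  have htc : (t + 1) * c ≤ b ^ m := calc
    (t + 1) * c ≤ b ^ u * c := Nat.mul_le_mul_right c ht
    _ = α + 1 := hc.symm
    _ ≤ b ^ m := hαc ▸ Nat.add_le_add_left hc0 α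
  obtain ⟨a, ha⟩ := Nat.exists_eq_add_of_le htc
  have htc0 : 0 < (t + 1) * c := Nat.mul_pos t.succ_pos hc0
  refine ⟨m, a, by omega, by linear_combination (t + 1) * hαc + ha, ?_⟩
  have htα : (t + 1) * (α + 1) = b ^ u * ((t + 1) * c) := by rw [hc]; ring
  rw [pow_add, ha, mul_add, ← htα]
  ring

lemma two_mul_sum_digits_mul_of_mul_pow_add_one_eq (hb : 1 < b) {u n α i : ℕ} (hn : n ≠ 0)
    (hα : α * (b ^ u + 1) = b ^ n - 1) (hi : 0 < i) (hiu : i ≤ b ^ u) :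
    2 * (b.digits (i * α)).sum = n * (b - 1) := by
  obtain ⟨t, rfl⟩ := Nat.exists_eq_add_of_le' hi
  obtain ⟨m, a, ha, hblocks, hcompl⟩ := exists_digit_blocks_of_mul_pow_add_one_eq hb hn hα hiu
  have hsum := sum_digits_add_base_pow_mul hb ha t
  have hrot := sum_digits_add_base_pow_mul hb hiu a
  have hadd := sum_digits_add_sum_digits_of_add_add_one_eq_pow hb hcompl
  rw [hblocks] at hadd ⊢
  omega

end DigitSum

lemma dvd_choose_of_sum_digits_le {p n k : ℕ} (hp : p.Prime) (hkn : k < n)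
    (h : (p.digits n).sum ≤ (p.digits k).sum) : p ∣ n.choose k := by
  have : Fact p.Prime := ⟨hp⟩
  by_contra hndvd
  have kummer := sub_one_mul_padicValNat_choose_eq_sub_sum_digits (p := p) hkn.le
  rw [padicValNat.eq_zero_of_not_dvd hndvd] at kummer
  have hsub : n - k ≠ 0 := Nat.sub_ne_zero_of_lt hkn
  have hpos : 0 < (p.digits (n - k)).sum :=
    List.sum_pos_iff_exists_pos_nat.mpr
      ⟨_, List.getLast_mem (Nat.digits_ne_nil_iff_ne_zero.mpr hsub),
        Nat.pos_of_ne_zero (Nat.getLast_digit_ne_zero p hsub)⟩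
  omega

lemma pow_add_one_dvd_pow_sub_one (b : ℕ) {m n : ℕ} (h : 2 * m ∣ n) : b ^ m + 1 ∣ b ^ n - 1 := by
  have hsq : b ^ (2 * m) - 1 = (b ^ m + 1) * (b ^ m - 1) := by
    rw [mul_comm, pow_mul, ← Nat.sq_sub_sq, one_pow]
  exact (Dvd.intro _ hsq.symm).trans (Nat.pow_sub_one_dvd_pow_sub_one b h)

lemma two_mul_mul_div_gcd (u v : ℕ) : 2 * u * v / u.gcd v = 2 * u.lcm v := by
  rw [mul_assoc, Nat.mul_div_assoc _ ((Nat.gcd_dvd_left u v).mul_right v), Nat.lcm_eq_mul_div]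

theorem stmt_15_general {p u v n α β i j : ℕ} (hp : p.Prime) (hn : n ≠ 0)
    (hα : α * (p ^ u + 1) = p ^ n - 1) (hβ : β * (p ^ v + 1) = p ^ n - 1)
    (hi : 0 < i) (hj : j ≤ p ^ v) (hij : i * (p ^ v + 1) < j * (p ^ u + 1)) :
    p ∣ Nat.choose (j * β) (i * α) := by
  have hj0 : 0 < j := Nat.pos_of_mul_pos_right (Nat.zero_lt_of_lt hij)
  have hiu : i ≤ p ^ u := by
    refine Nat.lt_succ_iff.mp (lt_of_mul_lt_mul_right (a := p ^ v + 1) (hij.trans_le ?_)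
      (Nat.zero_le _))
    rw [mul_comm]
    exact Nat.mul_le_mul_left _ (Nat.le_succ_of_le hj)
  have hlt : i * α < j * β := by
    refine lt_of_mul_lt_mul_right (a := (p ^ u + 1) * (p ^ v + 1)) ?_ (Nat.zero_le _)
    calc i * α * ((p ^ u + 1) * (p ^ v + 1))
        = i * (p ^ v + 1) * (p ^ n - 1) := by rw [← hα]; ring
      _ < j * (p ^ u + 1) * (p ^ n - 1) :=
        Nat.mul_lt_mul_of_pos_right hij (Nat.sub_pos_of_lt (Nat.one_lt_pow hn hp.one_lt))
      _ = j * β * ((p ^ u + 1) * (p ^ v + 1)) := by rw [← hβ]; ring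
  have hiα := two_mul_sum_digits_mul_of_mul_pow_add_one_eq hp.one_lt hn hα hi hiu
  have hjβ := two_mul_sum_digits_mul_of_mul_pow_add_one_eq hp.one_lt hn hβ hj0 hj
  exact dvd_choose_of_sum_digits_le hp hlt (by omega)

/-- Theorem 4.7 (`+formulas-thm4`), key vanishing: with `d = gcd(u,v)`, `q = p^(2uv/d)`,
`α = (q−1)/(pᵘ+1)`, `β = (q−1)/(pᵛ+1)`, for all `1 ≤ i ≤ pᵘ`, `1 ≤ j ≤ pᵛ` with
`i(pᵛ+1) < j(pᵘ+1)`, the binomial coefficient `C(jβ, iα)` is divisible by `p`. -/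
theorem stmt_15 (p u v : ℕ) (hp : p.Prime) (hu : 0 < u) (hv : 0 < v)
    (d q α β : ℕ) (hd : d = Nat.gcd u v) (hq : q = p ^ (2 * u * v / d))
    (hα : α = (q - 1) / (p ^ u + 1)) (hβ : β = (q - 1) / (p ^ v + 1))
    (i j : ℕ) (hi1 : 1 ≤ i) (hi2 : i ≤ p ^ u) (hj1 : 1 ≤ j) (hj2 : j ≤ p ^ v)
    (hij : i * (p ^ v + 1) < j * (p ^ u + 1)) :
    p ∣ Nat.choose (j * β) (i * α) := by
  subst hd hq hα hβ
  rw [two_mul_mul_div_gcd]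
  have hlcm : 2 * u.lcm v ≠ 0 := mul_ne_zero two_ne_zero (Nat.lcm_pos hu hv).ne'
  have hα := pow_add_one_dvd_pow_sub_one p (mul_dvd_mul_left 2 (Nat.dvd_lcm_left u v))
  have hβ := pow_add_one_dvd_pow_sub_one p (mul_dvd_mul_left 2 (Nat.dvd_lcm_right u v))
  exact stmt_15_general hp hlcm (Nat.div_mul_cancel hα) (Nat.div_mul_cancel hβ) hi1 hj2 hij
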